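/- Suppose there exists a constant c > 0 such that for every positive integer k, every Hamiltonian graph G on n ≥ c·k^{11/5} vertices with independence number at most k, and every vertex set W of G with |W| ≤ 20k², G contains a cycle of length n−1 passing through all vertices of W. Then there exists a constant c' > 0 such that for every positive integer k, every Hamiltonian graph on n ≥ c'·k^{11/5} vertices with independence number at most k is pancyclic. -/

import Mathlib

/-- A list is a path of `G`: no repetitions and consecutive vertices adjacent. -/
def IsPL {V : Type} (G : SimpleGraph V) (l : List V) : Prop := l.Nodup ∧ l.IsChain G.Adj

/-- A list is a cycle of `G`. -/
def IsCL {V : Type} (G : SimpleGraph V) (l : List V) : Prop :=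
  l.Nodup ∧ 3 ≤ l.length ∧ Cycle.Chain G.Adj (l : Cycle V)

/-- A list is a path of `G` from `a` to `b`. -/
def PP {V : Type} (G : SimpleGraph V) (a b : V) (l : List V) : Prop :=
  IsPL G l ∧ l.head? = some a ∧ l.getLast? = some b

/-- all independent subsets of `S` have size at most `k` -/
def AlphaLE {V : Type} (G : SimpleGraph V) (S : Finset V) (k : ℕ) : Prop :=
  ∀ s : Finset V, s ⊆ S → (∀ u ∈ s, ∀ v ∈ s, u ≠ v → ¬ G.Adj u v) → s.card ≤ k

lemma IsCL.to_walk {V : Type} {G : SimpleGraph V} {l : List V} (h : IsCL G l) :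
    ∃ (u : V) (w : G.Walk u u), w.IsCycle ∧ w.length = l.length ∧
      ∀ x, x ∈ w.support ↔ x ∈ l := by
  obtain ⟨hn, h3, hc⟩ := h
  match l, hn, h3, hc with
  | a :: t, hn, h3, hc =>
    rw [Cycle.chain_coe_cons] at hc
    have hne : a :: (t ++ [a]) ≠ [] := by simp
    let w0 := SimpleGraph.Walk.ofSupport (a :: (t ++ [a])) hne hc
    have hlast : (a :: (t ++ [a])).getLast hne = a := by simp
    have hhead : (a :: (t ++ [a])).head hne = a := by simp
    let w : G.Walk a a := w0.copy hhead hlast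
    have hs : w.support = a :: (t ++ [a]) := by
      change (w0.copy hhead hlast).support = _
      rw [SimpleGraph.Walk.support_copy]
      exact SimpleGraph.Walk.support_ofSupport hne hc
    have hl : w.length = (a :: t).length := by
      have := congrArg List.length hs
      simp at this ⊢
      exact this
    refine ⟨a, w, ?_, hl, ?_⟩
    · rw [SimpleGraph.Walk.isCycle_iff_isPath_tail_and_le_length]
      refine ⟨?_, by omega⟩
      rw [SimpleGraph.Walk.isPath_def, SimpleGraph.Walk.support_tail_of_not_nil, hs]
      · simp only [List.tail_cons]
        exact (List.perm_append_singleton a t).nodup_iff.mpr hn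
      · intro hnil
        have := SimpleGraph.Walk.length_eq_zero_iff.mpr hnil
        omega
    · intro x
      rw [hs]
      simp
      tauto

lemma walk_to_list {V : Type} {G : SimpleGraph V} {u : V} (w : G.Walk u u) (h : w.IsCycle) :
    ∃ l, IsCL G l ∧ l.length = w.length ∧ ∀ x, x ∈ l ↔ x ∈ w.support := by
  have h3 := h.three_le_length
  have hnd := h.nodup_dropLast_support
  have hne := w.support_ne_nil
  have hs : w.support = w.support.dropLast ++ [u] := by
    conv_lhs => rw [← List.dropLast_append_getLast hne]
    simp
  have hlen : w.support.dropLast.length = w.length := by simp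
  have hch := w.isChain_adj_support
  obtain ⟨a, t, hat⟩ : ∃ a t, w.support.dropLast = a :: t := by
    cases hd : w.support.dropLast with
    | nil => rw [hd] at hlen; simp at hlen; omega
    | cons a t => exact ⟨a, t, rfl⟩
  have hau : a = u := by
    have h1 : w.support.head hne = u := by simp
    rw [hat] at hs
    simp only [hs] at h1
    simpa using h1
  subst hau
  refine ⟨a :: t, ⟨hat ▸ hnd, by rw [← hat, hlen]; exact h3, ?_⟩, by rw [← hat, hlen], ?_⟩
  · rw [Cycle.chain_coe_cons]
    rw [hs, hat] at hch
    exact hch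
  · intro x
    rw [hs, hat]
    simp
    tauto

lemma join_cycle {V : Type} {G : SimpleGraph V} {a b : V} {p q : List V}
    (hp : IsPL G (a :: (p ++ [b]))) (hq : IsPL G (a :: (q ++ [b])))
    (hd : ∀ x ∈ p, x ∉ q) (hlen : 1 ≤ p.length + q.length) :
    IsCL G (a :: (p ++ b :: q.reverse)) := by
  obtain ⟨hp1, hp2⟩ := hp
  obtain ⟨hq1, hq2⟩ := hq
  refine ⟨?_, ?_, ?_⟩
  · simp only [List.nodup_cons, List.mem_append, List.nodup_append, List.mem_cons, List.mem_reverse,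
      List.nodup_reverse, List.not_mem_nil] at *
    grind
  · simp; omega
  · rw [Cycle.chain_coe_cons]
    have : a :: ((p ++ b :: q.reverse) ++ [a]) = (a :: p) ++ b :: (q.reverse ++ [a]) := by simp
    rw [this, List.isChain_split]
    refine ⟨by simpa using hp2, ?_⟩
    have h2 : b :: (q.reverse ++ [a]) = (a :: (q ++ [b])).reverse := by simp
    rw [h2, List.isChain_reverse]
    exact hq2.imp (fun _ _ h => h.symm)

lemma IsPL.reverse {V : Type} {G : SimpleGraph V} {l : List V} (h : IsPL G l) :
    IsPL G l.reverse := by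
  refine ⟨List.nodup_reverse.mpr h.1, ?_⟩
  rw [List.isChain_reverse]
  exact h.2.imp (fun _ _ h => h.symm)

lemma PP.form {V : Type} {G : SimpleGraph V} {a b : V} {l : List V} (h : PP G a b l)
    (hab : a ≠ b) : ∃ m, l = a :: (m ++ [b]) := by
  obtain ⟨-, h1, h2⟩ := h
  cases l with
  | nil => simp at h1
  | cons x t =>
    simp at h1
    subst h1
    rcases List.eq_nil_or_concat t with rfl | ⟨m, y, rfl⟩
    · simp at h2; exact absurd h2 hab
    · refine ⟨m, ?_⟩
      have : (x :: m.concat y).getLast? = some y := by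
        rw [List.concat_eq_append, ← List.cons_append, List.getLast?_append]; simp
      rw [this] at h2
      simp at h2
      subst h2
      simp

/-- one shortening step -/
lemma shorten_step {V : Type} [DecidableEq V] {G : SimpleGraph V} {S : Finset V} {k : ℕ}
    (hα : AlphaLE G S k) (l : List V) (hS : ∀ x ∈ l, x ∈ S) (hl : IsPL G l)
    (hk : 2 * k + 1 ≤ l.length) :
    ∃ l', IsPL G l' ∧ l'.Sublist l ∧ l'.head? = l.head? ∧ l'.getLast? = l.getLast? ∧
      l'.length < l.length ∧ l.length + 1 ≤ l'.length + 2 * k := by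
  have hex : ∃ i j, i < j ∧ j ≤ k ∧ ∃ (hi : 2 * i < l.length) (hj : 2 * j < l.length),
      G.Adj l[2*i] l[2*j] := by
    by_contra hcon
    push Not at hcon
    let f : Fin (k + 1) → V := fun i => l[2 * i.1]'(by omega)
    have hf : Function.Injective f := by
      intro i j hij
      have := (List.Nodup.getElem_inj_iff hl.1).mp hij
      ext; omega
    have hc := hα (Finset.univ.image f) (by
      intro x hx
      simp only [Finset.mem_image, Finset.mem_univ, true_and] at hx
      obtain ⟨i, rfl⟩ := hx
      exact hS _ (List.getElem_mem _)) (by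
      intro u hu v hv huv
      simp only [Finset.mem_image, Finset.mem_univ, true_and] at hu hv
      obtain ⟨i, rfl⟩ := hu
      obtain ⟨j, rfl⟩ := hv
      have hij : i ≠ j := fun h => huv (by rw [h])
      have hij' : i.1 ≠ j.1 := fun h => hij (Fin.ext h)
      rcases lt_or_gt_of_ne hij' with h | h
      · exact hcon i.1 j.1 h (by omega) (by omega) (by omega)
      · intro hadj
        exact hcon j.1 i.1 h (by omega) (by omega) (by omega) hadj.symm)
    rw [Finset.card_image_of_injective _ hf] at hc
    simp at hc
  obtain ⟨i, j, hij, hjk, hi, hj, hadj⟩ := hex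
  have hsub : (l.take (2 * i + 1) ++ l.drop (2 * j)).Sublist l := by
    conv_rhs => rw [← List.take_append_drop (2 * i + 1) l]
    refine List.Sublist.append_left ?_ _
    have : 2 * j = (2 * i + 1) + (2 * j - (2 * i + 1)) := by omega
    rw [this, ← List.drop_drop]
    exact List.drop_sublist _ _
  refine ⟨l.take (2 * i + 1) ++ l.drop (2 * j), ⟨hl.1.sublist hsub, ?_⟩, hsub, ?_, ?_, ?_, ?_⟩
  · refine List.IsChain.append (hl.2.prefix (List.take_prefix _ _))
      (hl.2.suffix (List.drop_suffix _ _)) ?_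
    intro x hx y hy
    rw [List.getLast?_take] at hx
    rw [List.head?_drop] at hy
    simp [List.getElem?_eq_getElem hi, List.getElem?_eq_getElem hj] at hx hy
    rw [← hx, ← hy]
    exact hadj
  · rw [List.head?_append, List.head?_take]
    cases l with
    | nil => simp at hi
    | cons a t => simp
  · rw [List.getLast?_append, List.getLast?_drop]
    have : ¬ l.length ≤ 2 * j := by omega
    simp only [this, if_false]
    cases l with
    | nil => simp at hi
    | cons a t => rw [List.getLast?_eq_getLast_of_ne_nil (by simp)]; simp
  · simp; omega
  · simp; omega

lemma shorten {V : Type} [DecidableEq V] {G : SimpleGraph V} {S : Finset V} {k : ℕ}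
    (hα : AlphaLE G S k) (t : ℕ) (ht : 2 * k ≤ t) (a b : V) : ∀ (n : ℕ) (l : List V),
    l.length = n → (∀ x ∈ l, x ∈ S) → PP G a b l → t ≤ l.length →
    ∃ l', PP G a b l' ∧ l'.Sublist l ∧ l'.length ≤ t ∧ t < l'.length + 2 * k + 1 := by
  intro n
  induction n using Nat.strong_induction_on with
  | _ n ih =>
    intro l hn hS hl htl
    by_cases hle : l.length ≤ t
    · exact ⟨l, hl, List.Sublist.refl _, hle, by omega⟩
    · obtain ⟨l1, h1, h2, h3, h4, h5, h6⟩ := shorten_step hα l hS hl.1 (by omega)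
      have hpp : PP G a b l1 := ⟨h1, by rw [h3]; exact hl.2.1, by rw [h4]; exact hl.2.2⟩
      by_cases hle' : t ≤ l1.length
      · obtain ⟨l', g1, g2, g3, g4⟩ := ih l1.length (by omega) l1 rfl
          (fun x hx => hS x (h2.subset hx)) hpp hle'
        exact ⟨l', g1, g2.trans h2, g3, g4⟩
      · exact ⟨l1, hpp, h2, by omega, by omega⟩

lemma exists_max_indep {V : Type} [DecidableEq V] (G : SimpleGraph V) (S : Finset V) :
    ∃ I ⊆ S, (∀ u ∈ I, ∀ v ∈ I, u ≠ v → ¬ G.Adj u v) ∧ AlphaLE G S I.card := by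
  classical
  obtain ⟨I, hI, hmax⟩ := Finset.exists_max_image
    (S.powerset.filter (fun I => ∀ u ∈ I, ∀ v ∈ I, u ≠ v → ¬ G.Adj u v)) Finset.card
    ⟨∅, by simp⟩
  simp only [Finset.mem_filter, Finset.mem_powerset] at hI hmax
  exact ⟨I, hI.1, hI.2, fun s hs hi => hmax s ⟨hs, hi⟩⟩

/-- `D` stays connected after removal of fewer than `κ` vertices. -/
def HighConn {V : Type} (G : SimpleGraph V) (D : Finset V) (κ : ℕ) : Prop :=
  ∀ X : Finset V, X.card < κ → ∀ x ∈ D, x ∉ X → ∀ y ∈ D, y ∉ X →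
    ∃ l, PP G x y l ∧ ∀ z ∈ l, z ∈ D ∧ z ∉ X

lemma exists_highConn {V : Type} [DecidableEq V] (G : SimpleGraph V) (κ : ℕ) :
    ∀ (n : ℕ) (S : Finset V) (j : ℕ), S.card = n → 1 ≤ j → AlphaLE G S j →
    κ * (3 * j) ≤ S.card + κ → ∃ D ⊆ S, 2 * κ ≤ D.card ∧ HighConn G D κ := by
  classical
  intro n
  induction n using Nat.strong_induction_on with
  | _ n ih =>
    intro S j hn hj hα hS
    by_cases hconn : HighConn G S κ
    · refine ⟨S, subset_rfl, ?_, hconn⟩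
      have : κ * 3 ≤ κ * (3 * j) := Nat.mul_le_mul_left _ (by omega)
      omega
    · unfold HighConn at hconn
      push Not at hconn
      obtain ⟨X, hX, x, hxS, hxX, y, hyS, hyX, hno⟩ := hconn
      let H : SimpleGraph V :=
        { Adj := fun u v => G.Adj u v ∧ (u ∈ S ∧ u ∉ X) ∧ (v ∈ S ∧ v ∉ X)
          symm := ⟨fun u v h => ⟨h.1.symm, h.2.2, h.2.1⟩⟩
          loopless := ⟨fun u h => G.loopless.irrefl u h.1⟩ }
      let S1 := (S \ X).filter (fun w => H.Reachable x w)
      let S2 := (S \ X).filter (fun w => ¬ H.Reachable x w)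
      have hx1 : x ∈ S1 := by simp [S1, hxS, hxX]
      have hy2 : y ∈ S2 := by
        simp only [S2, Finset.mem_filter, Finset.mem_sdiff]
        refine ⟨⟨hyS, hyX⟩, fun hr => ?_⟩
        obtain ⟨p, hp⟩ := hr.exists_isPath
        have hin : ∀ {u v : V} (q : H.Walk u v), (u ∈ S ∧ u ∉ X) →
            ∀ z ∈ q.support, z ∈ S ∧ z ∉ X := by
          intro u v q
          induction q with
          | nil => intro hu z hz; simp at hz; rw [hz]; exact hu
          | cons hadj q ih =>
            intro hu z hz
            simp only [SimpleGraph.Walk.support_cons, List.mem_cons] at hz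
            rcases hz with rfl | hz
            · exact hu
            · exact ih hadj.2.2 z hz
        obtain ⟨z, hz, hz2⟩ := hno p.support ⟨⟨hp.support_nodup,
          p.isChain_adj_support.imp (fun _ _ h => h.1)⟩,
          by rw [List.head?_eq_some_head p.support_ne_nil]; simp,
          by rw [List.getLast?_eq_some_getLast p.support_ne_nil]; simp⟩
        have := hin p ⟨hxS, hxX⟩ z hz
        exact this.2 (hz2 this.1)
      have hcard : S1.card + S2.card = (S \ X).card :=
        Finset.card_filter_add_card_filter_not _
      have hcard2 : S.card ≤ (S \ X).card + X.card := by
        have := Finset.le_card_sdiff X S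
        omega
      have hcross : ∀ u ∈ S1, ∀ v ∈ S2, ¬ G.Adj u v := by
        intro u hu v hv hadj
        simp only [S1, S2, Finset.mem_filter, Finset.mem_sdiff] at hu hv
        exact hv.2 (hu.2.trans (SimpleGraph.Adj.reachable ⟨hadj, hu.1, hv.1⟩))
      have hdisj : ∀ u ∈ S1, u ∉ S2 := by
        intro u hu hv
        simp only [S1, S2, Finset.mem_filter] at hu hv
        exact hv.2 hu.2
      have hs1 : S1 ⊆ S := (Finset.filter_subset _ _).trans Finset.sdiff_subset
      have hs2 : S2 ⊆ S := (Finset.filter_subset _ _).trans Finset.sdiff_subset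
      obtain ⟨I, hI, hIi, hImax⟩ := exists_max_indep G S1
      have hI1 : 1 ≤ I.card := by
        have := hImax {x} (by simpa using hx1) (by simp)
        simpa using this
      have hα2 : ∀ s ⊆ S2, (∀ u ∈ s, ∀ v ∈ s, u ≠ v → ¬ G.Adj u v) → s.card + I.card ≤ j := by
        intro s hs hsi
        have hd : Disjoint s I := by
          rw [Finset.disjoint_left]
          intro a ha hb
          exact hdisj a (hI hb) (hs ha)
        rw [← Finset.card_union_of_disjoint hd]
        refine hα _ (Finset.union_subset (hs.trans hs2) (hI.trans hs1)) ?_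
        intro u hu v hv huv
        rw [Finset.mem_union] at hu hv
        rcases hu with hu | hu <;> rcases hv with hv | hv
        · exact hsi u hu v hv huv
        · exact fun h => hcross v (hI hv) u (hs hu) h.symm
        · exact hcross u (hI hu) v (hs hv)
        · exact hIi u hu v hv huv
      have hj2 : 1 + I.card ≤ j := by
        have := hα2 {y} (by simpa using hy2) (by simp)
        simpa using this
      have hc1 : 0 < S1.card := Finset.card_pos.mpr ⟨x, hx1⟩
      have hc2 : 0 < S2.card := Finset.card_pos.mpr ⟨y, hy2⟩
      have hle : (S \ X).card ≤ S.card := Finset.card_le_card Finset.sdiff_subset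
      by_cases h1 : κ * (3 * I.card) ≤ S1.card + κ
      · obtain ⟨D, hD, h⟩ := ih S1.card (by omega) S1 I.card rfl hI1 hImax h1
        exact ⟨D, hD.trans hs1, h⟩
      by_cases h2 : κ * (3 * (j - I.card)) ≤ S2.card + κ
      · obtain ⟨D, hD, h⟩ := ih S2.card (by omega) S2 (j - I.card) rfl (by omega)
          (fun s hs hi => by have := hα2 s hs hi; omega) h2
        exact ⟨D, hD.trans hs2, h⟩
      exfalso
      obtain ⟨r, hr⟩ := Nat.exists_eq_add_of_le (show I.card ≤ j by omega)
      have hr2 : j - I.card = r := by omega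
      rw [hr2] at h2
      rw [hr] at hS
      have : κ * (3 * (I.card + r)) = κ * (3 * I.card) + κ * (3 * r) := by ring
      omega

lemma highConn_degree {V : Type} [DecidableEq V] {G : SimpleGraph V} [DecidableRel G.Adj]
    {D : Finset V} {κ b k : ℕ}
    (hD : HighConn G D κ) (hc : 2 * κ ≤ D.card) (hb : b + k < κ) (x : V) (hx : x ∈ D)
    (X : Finset V) (hX : X.card ≤ b) :
    k < (D.filter (fun v => G.Adj x v ∧ v ∉ X)).card := by
  by_contra hcon
  push Not at hcon
  set N := D.filter (fun v => G.Adj x v ∧ v ∉ X) with hN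
  let Y := (X ∪ N).erase x
  have hY : Y.card ≤ b + k :=
    (Finset.card_erase_le).trans ((Finset.card_union_le _ _).trans (by omega))
  obtain ⟨y, hy, hyY⟩ : ∃ y ∈ D, y ∉ insert x Y := by
    by_contra h
    push Not at h
    have h1 : D.card ≤ (insert x Y).card := Finset.card_le_card h
    have h2 := Finset.card_insert_le x Y
    omega
  rw [Finset.mem_insert, not_or] at hyY
  obtain ⟨l, hl, hlD⟩ := hD Y (by omega) x hx (by simp [Y]) y hy hyY.2
  obtain ⟨m, rfl⟩ := hl.form (fun h => hyY.1 h.symm)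
  obtain ⟨z, t, hzt⟩ : ∃ z t, m ++ [y] = z :: t := by
    cases m with
    | nil => exact ⟨y, [], rfl⟩
    | cons z t => exact ⟨z, t ++ [y], rfl⟩
  rw [hzt] at hl hlD
  have hadj : G.Adj x z := by
    have := hl.1.2
    rw [List.isChain_cons_cons] at this
    exact this.1
  have hz := hlD z (by simp)
  apply hz.2
  simp only [Y, Finset.mem_erase, Finset.mem_union]
  refine ⟨hadj.ne', ?_⟩
  by_cases hzX : z ∈ X
  · exact Or.inl hzX
  · exact Or.inr (by simp [hN, hz.1, hadj, hzX])

/-- The chain of triangles. -/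
lemma triangle_chain {V : Type} [DecidableEq V] {G : SimpleGraph V} [DecidableRel G.Adj]
    {D : Finset V} {b k : ℕ} (hα : AlphaLE G D k)
    (hdeg : ∀ x ∈ D, ∀ X : Finset V, X.card ≤ b →
      k < (D.filter (fun v => G.Adj x v ∧ v ∉ X)).card) :
    ∀ (j : ℕ) (X : Finset V) (x : V), X.card + 2 * j ≤ b → x ∈ D → x ∉ X →
    ∃ (z : V) (T : Finset V), T ⊆ D ∧ Disjoint T X ∧ T.card ≤ 2 * j + 1 ∧ z ∈ T ∧
      ∀ t, j ≤ t → t ≤ 2 * j → ∃ p : List V, p.length = t ∧ PP G x z (p ++ [z]) ∧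
        ∀ v ∈ p, v ∈ T := by
  intro j
  induction j with
  | zero =>
    intro X x hX hx hxX
    refine ⟨x, {x}, by simpa using hx, by simpa using hxX, by simp, by simp, ?_⟩
    intro t _ ht
    refine ⟨[], by simp; omega, ⟨⟨by simp, by simp⟩, by simp, by simp⟩, by simp⟩
  | succ j ih =>
    intro X x hX hx hxX
    have hN := hdeg x hx X (by omega)
    set N := D.filter (fun v => G.Adj x v ∧ v ∉ X) with hNdef
    obtain ⟨a, ha, c, hc, hac, hadj⟩ : ∃ a ∈ N, ∃ c ∈ N, a ≠ c ∧ G.Adj a c := by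
      by_contra hcon
      push Not at hcon
      have := hα N (Finset.filter_subset _ _) hcon
      omega
    simp only [hNdef, Finset.mem_filter] at ha hc
    have hxa := ha.2.1.ne
    have hxc := hc.2.1.ne
    have hX' : (insert x (insert a X)).card ≤ X.card + 2 :=
      (Finset.card_insert_le _ _).trans (by
        have := Finset.card_insert_le a X
        omega)
    obtain ⟨z, T, hT, hTX, hTc, hzT, hp⟩ := ih (insert x (insert a X)) c (by omega) hc.1 (by
      simp only [Finset.mem_insert, not_or]
      exact ⟨hxc.symm, hac.symm, hc.2.2⟩)
    have hdis : ∀ v ∈ T, v ≠ x ∧ v ≠ a ∧ v ∉ X := by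
      intro v hv
      have := Finset.disjoint_left.mp hTX hv
      simpa only [Finset.mem_insert, not_or] using this
    refine ⟨z, insert x (insert a T), ?_, ?_, ?_, ?_, ?_⟩
    · intro v hv
      simp only [Finset.mem_insert] at hv
      rcases hv with rfl | rfl | hv
      · exact hx
      · exact ha.1
      · exact hT hv
    · rw [Finset.disjoint_left]
      intro v hv
      simp only [Finset.mem_insert] at hv
      rcases hv with rfl | rfl | hv
      · exact hxX
      · exact ha.2.2
      · exact (hdis v hv).2.2
    · have h1 := Finset.card_insert_le x (insert a T)
      have h2 := Finset.card_insert_le a T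
      omega
    · simp [hzT]
    · intro t ht1 ht2
      have key : ∀ p : List V, PP G c z (p ++ [z]) → (∀ v ∈ p, v ∈ T) →
          ∃ q, p ++ [z] = c :: q ∧ ∀ v ∈ p ++ [z], v ∈ T := by
        intro p hpp hpT
        have h1 := hpp.2.1
        cases hq : p ++ [z] with
        | nil => simp at hq
        | cons d q =>
          rw [hq] at h1
          simp at h1
          refine ⟨q, by rw [h1], ?_⟩
          intro v hv
          rw [← hq] at hv
          simp only [List.mem_append, List.mem_singleton] at hv
          rcases hv with hv | rfl
          · exact hpT v hv
          · exact hzT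
      by_cases hcase : t ≤ 2 * j + 1
      · obtain ⟨p, hpl, hpp, hpT⟩ := hp (t - 1) (by omega) (by omega)
        obtain ⟨q, hq, hqT⟩ := key p hpp hpT
        refine ⟨x :: p, by simp; omega, ⟨⟨?_, ?_⟩, by simp, ?_⟩, ?_⟩
        · rw [List.cons_append, List.nodup_cons]
          exact ⟨fun h => (hdis x (hqT x h)).1 rfl, hpp.1.1⟩
        · rw [List.cons_append, hq, List.isChain_cons_cons, ← hq]
          exact ⟨hc.2.1, hpp.1.2⟩
        · rw [List.getLast?_append]
          simp
        · intro v hv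
          simp only [List.mem_cons] at hv
          rcases hv with rfl | hv
          · simp
          · simp [hpT v hv]
      · obtain ⟨p, hpl, hpp, hpT⟩ := hp (t - 2) (by omega) (by omega)
        obtain ⟨q, hq, hqT⟩ := key p hpp hpT
        refine ⟨x :: a :: p, by simp; omega, ⟨⟨?_, ?_⟩, by simp, ?_⟩, ?_⟩
        · rw [List.cons_append, List.cons_append, List.nodup_cons, List.nodup_cons]
          refine ⟨fun h => ?_, fun h => (hdis a (hqT a h)).2.1 rfl, hpp.1.1⟩
          rw [List.mem_cons] at h
          rcases h with h | h
          · exact hxa h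
          · exact (hdis x (hqT x h)).1 rfl
        · rw [List.cons_append, List.cons_append, hq, List.isChain_cons_cons,
            List.isChain_cons_cons, ← hq]
          exact ⟨ha.2.1, hadj, hpp.1.2⟩
        · rw [List.cons_append, List.cons_append, ← List.cons_append, ← List.cons_append,
            List.getLast?_append]
          simp
        · intro v hv
          simp only [List.mem_cons] at hv
          rcases hv with rfl | rfl | hv
          · simp
          · simp
          · simp [hpT v hv]

/-- Paths of all lengths in a range between two given vertices of `D`. -/
lemma flexible {V : Type} [DecidableEq V] {G : SimpleGraph V}
    {D : Finset V} {k : ℕ} (hk : 1 ≤ k) (hα : AlphaLE G D k)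
    (hD : HighConn G D (7 * k)) (hc : 14 * k ≤ D.card) (x y : V) (hx : x ∈ D) (hy : y ∈ D)
    (hxy : x ≠ y) :
    ∃ s, s ≤ 4 * k ∧ 3 ≤ s ∧ ∀ t, s ≤ t → t ≤ s + 2 * k → ∃ m : List V, m.length + 2 = t ∧
      IsPL G (x :: (m ++ [y])) ∧ ∀ v ∈ m, v ∈ D := by
  classical
  have hdeg : ∀ x ∈ D, ∀ X : Finset V, X.card ≤ 4 * k + 1 →
      k < (D.filter (fun v => G.Adj x v ∧ v ∉ X)).card := fun x hx X hX =>
    highConn_degree hD (by omega) (by omega) x hx X hX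
  obtain ⟨z, T, hT, hTy, hTc, hzT, hp⟩ := triangle_chain hα hdeg (2 * k) {y} x
    (by simp; omega) hx (by simpa using hxy)
  have hyT : y ∉ T := by simpa using hTy
  have hzy : z ≠ y := fun h => hyT (h ▸ hzT)
  have hTe : (T.erase z).card < 7 * k := by
    have := Finset.card_erase_le (s := T) (a := z)
    omega
  obtain ⟨l, hl, hlD⟩ := hD (T.erase z) hTe z (hT hzT) (by simp) y hy
    (fun h => hyT (Finset.mem_of_mem_erase h))
  obtain ⟨l', hl', hl's, hl'len⟩ : ∃ l', PP G z y l' ∧ l'.Sublist l ∧ l'.length ≤ 2 * k := by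
    by_cases hle : 2 * k ≤ l.length
    · obtain ⟨l', h1, h2, h3, -⟩ := shorten hα (2 * k) le_rfl z y l.length l rfl
        (fun x hx => (hlD x hx).1) hl hle
      exact ⟨l', h1, h2, h3⟩
    · exact ⟨l, hl, List.Sublist.refl _, by omega⟩
  obtain ⟨m', rfl⟩ := hl'.form hzy
  simp only [List.length_cons, List.length_append, List.length_nil] at hl'len
  have hm' : ∀ v ∈ z :: (m' ++ [y]), v ∈ D ∧ v ∉ T.erase z := fun v hv => hlD v (hl's.subset hv)
  refine ⟨2 * k + m'.length + 2, by omega, by omega, ?_⟩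
  intro t ht1 ht2
  obtain ⟨p, hpl, hpp, hpT⟩ := hp (t - (m'.length + 2)) (by omega) (by omega)
  cases p with
  | nil => simp at hpl; omega
  | cons x' p' =>
    have hxx : x' = x := by simpa using hpp.2.1
    subst hxx
    have heq : x' :: ((p' ++ z :: m') ++ [y]) = (x' :: p') ++ z :: (m' ++ [y]) := by simp
    refine ⟨p' ++ z :: m', ?_, ?_, ?_⟩
    · simp at hpl ⊢
      omega
    · rw [heq]
      refine ⟨?_, ?_⟩
      · rw [List.nodup_append]
        have hnd := hpp.1.1
        rw [List.nodup_append] at hnd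
        refine ⟨hnd.1, hl'.1.1, ?_⟩
        intro a ha b hb hab
        subst hab
        have h1 := (hm' a hb).2
        have h2 := hnd.2.2 a ha z (by simp)
        exact h1 (Finset.mem_erase.mpr ⟨h2, hpT a ha⟩)
      · rw [List.isChain_split]
        exact ⟨hpp.1.2, hl'.1.2⟩
    · intro v hv
      rw [List.mem_append] at hv
      rcases hv with hv | hv
      · exact hT (hpT v (by simp [hv]))
      · refine (hm' v ?_).1
        simp only [List.mem_cons, List.mem_append] at hv ⊢
        tauto

lemma IsCL.isPL {V : Type} {G : SimpleGraph V} {l : List V} (h : IsCL G l) : IsPL G l := by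
  obtain ⟨hn, h3, hc⟩ := h
  refine ⟨hn, ?_⟩
  cases l with
  | nil => simp
  | cons a t =>
    rw [Cycle.chain_coe_cons, ← List.cons_append] at hc
    exact hc.left_of_append

lemma IsCL.rotate {V : Type} {G : SimpleGraph V} {u v : List V} (h : IsCL G (u ++ v)) :
    IsCL G (v ++ u) := by
  have hr : (u ++ v) ~r (v ++ u) := ⟨u.length, by simp⟩
  refine ⟨hr.perm.nodup_iff.mp h.1, by rw [← hr.perm.length_eq]; exact h.2.1, ?_⟩
  have : ((v ++ u : List V) : Cycle V) = ((u ++ v : List V) : Cycle V) :=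
    Cycle.coe_eq_coe.mpr hr.symm
  rw [this]
  exact h.2.2

lemma link_list {V : Type} (A D : V → Prop) (hAD : ∀ x, A x → ¬ D x) : ∀ (l : List V),
    (∃ a ∈ l, A a) → (∃ d ∈ l, D d) →
    ∃ (u q v : List V) (a : V) (m : List V) (d : V), l = u ++ (q ++ v) ∧ A a ∧ D d ∧
      (q = a :: (m ++ [d]) ∨ q.reverse = a :: (m ++ [d])) ∧ ∀ x ∈ m, ¬ A x ∧ ¬ D x := by
  classical
  have first : ∀ (P : V → Prop) (l : List V), (∃ d ∈ l, P d) →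
      ∃ t1 d t2, l = t1 ++ d :: t2 ∧ P d ∧ ∀ x ∈ t1, ¬ P x := by
    intro P l
    induction l with
    | nil => simp
    | cons x t ih =>
      intro h
      by_cases hx : P x
      · exact ⟨[], x, t, by simp, hx, by simp⟩
      · obtain ⟨d, hd, hP⟩ := h
        rw [List.mem_cons] at hd
        rcases hd with rfl | hd
        · exact absurd hP hx
        · obtain ⟨t1, d', t2, h1, h2, h3⟩ := ih ⟨d, hd, hP⟩
          refine ⟨x :: t1, d', t2, by simp [h1], h2, ?_⟩
          intro y hy
          rw [List.mem_cons] at hy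
          rcases hy with rfl | hy
          · exact hx
          · exact h3 y hy
  intro l
  induction l with
  | nil => simp
  | cons x t ih =>
    intro hA hD
    by_cases hA' : ∃ a ∈ t, A a
    · by_cases hD' : ∃ d ∈ t, D d
      · obtain ⟨u, q, v, a, m, d, h1, h2⟩ := ih hA' hD'
        exact ⟨x :: u, q, v, a, m, d, by simp [h1], h2⟩
      · have hx : D x := by
          obtain ⟨d, hd, h⟩ := hD
          rw [List.mem_cons] at hd
          rcases hd with rfl | hd
          · exact h
          · exact absurd ⟨d, hd, h⟩ hD'
        obtain ⟨t1, a, t2, h1, h2, h3⟩ := first A t hA'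
        refine ⟨[], x :: (t1 ++ [a]), t2, a, t1.reverse, x, by simp [h1], h2, hx, Or.inr (by simp), ?_⟩
        intro y hy
        rw [List.mem_reverse] at hy
        exact ⟨h3 y hy, fun h => hD' ⟨y, by simp [h1, hy], h⟩⟩
    · have hx : A x := by
        obtain ⟨d, hd, h⟩ := hA
        rw [List.mem_cons] at hd
        rcases hd with rfl | hd
        · exact h
        · exact absurd ⟨d, hd, h⟩ hA'
      have hD' : ∃ d ∈ t, D d := by
        obtain ⟨d, hd, h⟩ := hD
        rw [List.mem_cons] at hd
        rcases hd with rfl | hd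
        · exact absurd h (hAD _ hx)
        · exact ⟨d, hd, h⟩
      obtain ⟨t1, d, t2, h1, h2, h3⟩ := first D t hD'
      refine ⟨[], x :: (t1 ++ [d]), t2, x, t1, d, by simp [h1], hx, h2, Or.inl rfl, ?_⟩
      intro y hy
      exact ⟨fun h => hA' ⟨y, by simp [h1, hy], h⟩, h3 y hy⟩

lemma two_links {V : Type} {G : SimpleGraph V} (A D : V → Prop) (hAD : ∀ x, A x → ¬ D x)
    (hA2 : ∀ a, ∃ a', A a' ∧ a' ≠ a) (hD2 : ∀ d, ∃ d', D d' ∧ d' ≠ d)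
    (l : List V) (hl : IsCL G l) (hall : ∀ x, x ∈ l) :
    ∃ a1 m1 d1 a2 m2 d2, A a1 ∧ A a2 ∧ D d1 ∧ D d2 ∧ IsPL G (a1 :: (m1 ++ [d1])) ∧
      IsPL G (a2 :: (m2 ++ [d2])) ∧ (∀ x ∈ m1, ¬ A x ∧ ¬ D x) ∧ (∀ x ∈ m2, ¬ A x ∧ ¬ D x) ∧
      (∀ x ∈ a1 :: (m1 ++ [d1]), x ∉ a2 :: (m2 ++ [d2])) := by
  have hex : ∃ x, x ∈ l := by
    cases l with
    | nil => have := hl.2.1; simp at this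
    | cons a t => exact ⟨a, by simp⟩
  obtain ⟨x0, -⟩ := hex
  obtain ⟨a0, ha0, -⟩ := hA2 x0
  obtain ⟨d0, hd0, -⟩ := hD2 x0
  obtain ⟨u, q1, v, a1, m1, d1, hl1, ha1, hd1, hq1, hm1⟩ :=
    link_list A D hAD l ⟨a0, hall _, ha0⟩ ⟨d0, hall _, hd0⟩
  have hmem1 : ∀ x, x ∈ q1 ↔ x ∈ a1 :: (m1 ++ [d1]) := by
    intro x
    rcases hq1 with h | h
    · rw [h]
    · rw [← h, List.mem_reverse]
  rw [hl1] at hl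
  have hrot := hl.rotate
  rw [List.append_assoc] at hrot
  have hp := hrot.isPL
  have hin : ∀ x, x ∉ q1 → x ∈ v ++ u := by
    intro x hx
    have := hall x
    rw [hl1] at this
    simp only [List.mem_append] at this ⊢
    tauto
  have hP1 : IsPL G (a1 :: (m1 ++ [d1])) := by
    have hq : IsPL G q1 := ⟨(List.nodup_append.mp hp.1).1, hp.2.left_of_append⟩
    rcases hq1 with h | h
    · rw [← h]; exact hq
    · rw [← h]; exact hq.reverse
  have hP2 : IsPL G (v ++ u) := ⟨(List.nodup_append.mp hp.1).2.1, hp.2.right_of_append⟩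
  obtain ⟨a', ha', hne⟩ := hA2 a1
  obtain ⟨d', hd', hned⟩ := hD2 d1
  have h1 : a' ∉ q1 := by
    rw [hmem1]
    simp only [List.mem_cons, List.mem_append, List.not_mem_nil, or_false, not_or]
    exact ⟨hne, fun h => (hm1 _ h).1 ha', fun h => hAD _ ha' (h ▸ hd1)⟩
  have h2 : d' ∉ q1 := by
    rw [hmem1]
    simp only [List.mem_cons, List.mem_append, List.not_mem_nil, or_false, not_or]
    exact ⟨fun h => hAD _ ha1 (h ▸ hd'), fun h => (hm1 _ h).2 hd', hned⟩
  obtain ⟨u', q2, v', a2, m2, d2, hl2, ha2, hd2, hq2, hm2⟩ :=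
    link_list A D hAD (v ++ u) ⟨a', hin _ h1, ha'⟩ ⟨d', hin _ h2, hd'⟩
  have hmem2 : ∀ x, x ∈ q2 ↔ x ∈ a2 :: (m2 ++ [d2]) := by
    intro x
    rcases hq2 with h | h
    · rw [h]
    · rw [← h, List.mem_reverse]
  refine ⟨a1, m1, d1, a2, m2, d2, ha1, ha2, hd1, hd2, hP1, ?_, hm1, hm2, ?_⟩
  · rw [hl2] at hP2
    have hq : IsPL G q2 := by
      refine ⟨?_, hP2.2.right_of_append.left_of_append⟩
      exact (List.nodup_append.mp (List.nodup_append.mp hP2.1).2.1).1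
    rcases hq2 with h | h
    · rw [← h]; exact hq
    · rw [← h]; exact hq.reverse
  · intro x hx hx2
    rw [← hmem1] at hx
    rw [← hmem2] at hx2
    have hx3 : x ∈ v ++ u := by rw [hl2]; simp [hx2]
    exact (List.nodup_append.mp hp.1).2.2 x hx x hx3 rfl

lemma arc {V : Type} {G : SimpleGraph V} {l : List V} (hl : IsCL G l) {a b : V} (ha : a ∈ l)
    (hb : b ∈ l) (hab : a ≠ b) :
    ∃ m, IsPL G (a :: (m ++ [b])) ∧ (∀ x ∈ m, x ∈ l) ∧ l.length ≤ 2 * m.length + 2 := by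
  obtain ⟨s, t, rfl⟩ := List.append_of_mem ha
  have hr := hl.rotate
  rw [List.cons_append] at hr
  have hb' : b ∈ t ++ s := by
    simp only [List.mem_append, List.mem_cons] at hb ⊢
    rcases hb with h | h | h
    · exact Or.inr h
    · exact absurd h.symm hab
    · exact Or.inl h
  have hmem : ∀ x, x ∈ t ++ s → x ∈ s ++ a :: t := by
    intro x hx
    simp only [List.mem_append, List.mem_cons] at hx ⊢
    tauto
  have hlen : (s ++ a :: t).length = (t ++ s).length + 1 := by simp; omega
  rw [hlen]
  obtain ⟨s1, s2, hs⟩ := List.append_of_mem hb'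
  rw [hs] at hr hmem
  rw [hs]
  obtain ⟨hnd, -, hc⟩ := hr
  rw [Cycle.chain_coe_cons] at hc
  have e1 : a :: ((s1 ++ b :: s2) ++ [a]) = (a :: s1) ++ b :: (s2 ++ [a]) := by simp
  rw [e1, List.isChain_split] at hc
  have h1 : IsPL G (a :: (s1 ++ [b])) := by
    refine ⟨?_, by simpa using hc.1⟩
    simp only [List.nodup_cons, List.nodup_append, List.mem_append, List.mem_cons] at hnd ⊢
    grind
  have h2 : IsPL G (a :: (s2.reverse ++ [b])) := by
    have : a :: (s2.reverse ++ [b]) = (b :: (s2 ++ [a])).reverse := by simp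
    rw [this]
    refine IsPL.reverse ⟨?_, hc.2⟩
    simp only [List.nodup_cons, List.nodup_append, List.mem_append, List.mem_cons] at hnd ⊢
    grind
  by_cases hle : s1.length ≤ s2.length
  · refine ⟨s2.reverse, h2, ?_, ?_⟩
    · intro x hx
      rw [List.mem_reverse] at hx
      exact hmem x (by simp [hx])
    · simp; omega
  · refine ⟨s1, h1, ?_, ?_⟩
    · intro x hx
      exact hmem x (by simp [hx])
    · simp; omega

lemma long_path {V : Type} {G : SimpleGraph V} (lV lA : List V) (D : Finset V)
    (hV : IsCL G lV) (hall : ∀ x, x ∈ lV) (hA : IsCL G lA) (hAD : ∀ x ∈ lA, x ∉ D)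
    (hD : 2 ≤ D.card) :
    ∃ d1 ∈ D, ∃ d2 ∈ D, d1 ≠ d2 ∧ ∃ Q, IsPL G (d1 :: (Q ++ [d2])) ∧ (∀ x ∈ Q, x ∉ D) ∧
      lA.length ≤ 2 * Q.length := by
  classical
  obtain ⟨a1, m1, d1, a2, m2, d2, ha1, ha2, hd1, hd2, hP1, hP2, hm1, hm2, hdis⟩ :=
    two_links (G := G) (fun x => x ∈ lA) (fun x => x ∈ D) hAD
    (by
      intro a
      have h1 : 1 < lA.toFinset.card := by
        rw [List.toFinset_card_of_nodup hA.1]; have := hA.2.1; omega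
      obtain ⟨b, hb, hne⟩ := Finset.exists_mem_ne h1 a
      exact ⟨b, by simpa using hb, hne⟩)
    (fun d => Finset.exists_mem_ne (by omega) d) lV hV hall
  have ha12 : a1 ≠ a2 := fun h => hdis a1 (by simp) (by simp [h])
  have hd12 : d1 ≠ d2 := fun h => hdis d1 (by simp) (by simp [h])
  obtain ⟨m, hm, hmA, hmlen⟩ := arc hA ha1 ha2 ha12
  refine ⟨d1, hd1, d2, hd2, hd12, m1.reverse ++ a1 :: (m ++ a2 :: m2), ⟨?_, ?_⟩, ?_, ?_⟩
  · have n1 := hP1.1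
    have n2 := hP2.1
    have n3 := hm.1
    have k1 := hAD a1 ha1
    have k2 := hAD a2 ha2
    simp only [List.nodup_cons, List.nodup_append, List.mem_append, List.mem_cons,
      List.nodup_reverse, List.mem_reverse, List.not_mem_nil, or_false, not_or] at n1 n2 n3 hdis ⊢
    refine ⟨⟨⟨?_, ?_, ?_, ?_⟩, ?_⟩, ⟨?_, ⟨⟨?_, ?_⟩, ?_, ⟨?_, ?_⟩, ?_⟩, ?_⟩, ?_, ?_⟩ <;> grind
  · have e : d1 :: ((m1.reverse ++ a1 :: (m ++ a2 :: m2)) ++ [d2]) =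
      (d1 :: m1.reverse) ++ a1 :: (m ++ a2 :: (m2 ++ [d2])) := by simp
    have e2 : a1 :: (m ++ a2 :: (m2 ++ [d2])) = (a1 :: m) ++ a2 :: (m2 ++ [d2]) := by simp
    rw [e, List.isChain_split]
    refine ⟨?_, ?_⟩
    · have := hP1.reverse.2
      simpa using this
    · rw [e2, List.isChain_split]
      exact ⟨by simpa using hm.2, hP2.2⟩
  · intro x hx
    simp only [List.mem_append, List.mem_cons, List.mem_reverse] at hx
    rcases hx with h | rfl | h | rfl | h
    · exact (hm1 x h).2
    · exact hAD _ ha1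
    · exact hAD _ (hmA x h)
    · exact hAD _ ha2
    · exact (hm2 x h).2
  · simp; omega

lemma medium {V : Type} [DecidableEq V] {G : SimpleGraph V} {k : ℕ} (hk : 1 ≤ k)
    (U : Finset V) (hU : ∀ x, x ∈ U) (hα : AlphaLE G U k) (lV lA : List V)
    (hV : IsCL G lV) (hall : ∀ x, x ∈ lV) (hA : IsCL G lA) (B : Finset V)
    (hB : ∀ x ∈ B, x ∉ lA) (hBc : 21 * k ^ 2 ≤ B.card) (ℓ : ℕ) (h1 : 6 * k ≤ ℓ)
    (h2 : 2 * ℓ ≤ lA.length) : ∃ l, IsCL G l ∧ l.length = ℓ := by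
  obtain ⟨D, hDB, hDc, hD⟩ := exists_highConn G (7 * k) B.card B k rfl hk
    (fun s hs hi => hα s (fun x _ => hU x) hi) (by nlinarith)
  obtain ⟨d1, hd1, d2, hd2, hne, Q, hQ, hQD, hQlen⟩ := long_path lV lA D hV hall hA
    (fun x hx hxD => hB x (hDB hxD) hx) (by omega)
  obtain ⟨s, hs, hs3, hflex⟩ := flexible hk (fun s hs hi => hα s (fun x _ => hU x) hi) hD
    (by omega) d1 d2 hd1 hd2 hne
  obtain ⟨l', hl', hsub, hle, hlt⟩ := shorten hα (ℓ + 2 - s) (by omega) d1 d2 _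
    (d1 :: (Q ++ [d2])) rfl (fun x _ => hU x)
    ⟨hQ, by simp, by rw [← List.cons_append, List.getLast?_append]; simp⟩ (by simp; omega)
  obtain ⟨Q', rfl⟩ := hl'.form hne
  simp only [List.length_cons, List.length_append, List.length_nil] at hle hlt
  obtain ⟨m, hm, hmP, hmD⟩ := hflex (ℓ + 2 - (Q'.length + 2)) (by omega) (by omega)
  have hQ'D : ∀ x ∈ Q', x ∉ m := by
    intro x hx hxm
    have hxQ : x ∈ d1 :: (Q ++ [d2]) := hsub.subset (by simp [hx])
    have hxD := hmD x hxm
    have n1 := hl'.1.1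
    simp only [List.nodup_cons, List.nodup_append, List.mem_append, List.mem_cons,
      List.not_mem_nil, or_false, not_or] at n1 hxQ
    grind
  refine ⟨_, join_cycle hl'.1 hmP hQ'D (by omega), ?_⟩
  simp
  omega

lemma mono_path {V K : Type} [DecidableEq V] [LinearOrder K] {G : SimpleGraph V} (key : V → K)
    (T0 : Finset V) (hinj : ∀ x ∈ T0, ∀ y ∈ T0, key x = key y → x = y) :
    ∀ (m : ℕ) (T : Finset V), T ⊆ T0 →
    (∃ l : List V, l.length = m + 1 ∧ (∀ x ∈ l, x ∈ T) ∧
      l.IsChain (fun x y => G.Adj x y ∧ key x < key y)) ∨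
    ∃ I ⊆ T, (∀ u ∈ I, ∀ v ∈ I, u ≠ v → ¬ G.Adj u v) ∧ T.card ≤ m * I.card := by
  classical
  intro m
  induction m with
  | zero =>
    intro T hT
    rcases T.eq_empty_or_nonempty with rfl | ⟨x, hx⟩
    · exact Or.inr ⟨∅, by simp⟩
    · exact Or.inl ⟨[x], by simp, by simpa using hx, by simp⟩
  | succ m ih =>
    intro T hT
    let T1 := T.filter (fun w => ∃ u ∈ T, G.Adj u w ∧ key u < key w)
    let T2 := T.filter (fun w => ¬ ∃ u ∈ T, G.Adj u w ∧ key u < key w)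
    have hcard : T1.card + T2.card = T.card := Finset.card_filter_add_card_filter_not _
    have hs1 : T1 ⊆ T := Finset.filter_subset _ _
    have hs2 : T2 ⊆ T := Finset.filter_subset _ _
    have hi2 : ∀ u ∈ T2, ∀ v ∈ T2, u ≠ v → ¬ G.Adj u v := by
      intro u hu v hv huv hadj
      have hu' := (Finset.mem_filter.mp hu).2
      have hv' := (Finset.mem_filter.mp hv).2
      rcases lt_trichotomy (key u) (key v) with h | h | h
      · exact hv' ⟨u, hs2 hu, hadj, h⟩
      · exact huv (hinj u (hT (hs2 hu)) v (hT (hs2 hv)) h)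
      · exact hu' ⟨v, hs2 hv, hadj.symm, h⟩
    rcases ih T1 (hs1.trans hT) with ⟨l, hl, hlT, hc⟩ | ⟨I, hI, hIi, hIc⟩
    · left
      cases l with
      | nil => simp at hl
      | cons w t =>
        obtain ⟨u, huT, hu⟩ := (Finset.mem_filter.mp (hlT w (by simp))).2
        refine ⟨u :: w :: t, by simpa using hl, ?_, ?_⟩
        · intro x hx
          rw [List.mem_cons] at hx
          rcases hx with rfl | hx
          · exact huT
          · exact hs1 (hlT x hx)
        · rw [List.isChain_cons_cons]
          exact ⟨hu, hc⟩
    · right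
      by_cases hle : I.card ≤ T2.card
      · refine ⟨T2, hs2, hi2, ?_⟩
        have := Nat.mul_le_mul_left m hle
        rw [Nat.succ_mul]
        omega
      · refine ⟨I, hI.trans hs1, hIi, ?_⟩
        rw [Nat.succ_mul]
        omega

lemma lex_convex (p q r : ℕ → ℕ) (h1 : toLex p ≤ toLex q) (h2 : toLex q ≤ toLex r) (J : ℕ)
    (hpr : ∀ j ≤ J, p j = r j) : ∀ j ≤ J, q j = p j := by
  intro j hj
  rcases h1.eq_or_lt with h1 | h1
  · rw [toLex_inj.mp h1]
  rcases h2.eq_or_lt with h2 | h2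
  · rw [toLex_inj.mp h2, hpr j hj]
  obtain ⟨a, ha, hpa⟩ := h1
  obtain ⟨b, hb, hqb⟩ := h2
  change ∀ j < a, p j = q j at ha
  change p a < q a at hpa
  change ∀ j < b, q j = r j at hb
  change q b < r b at hqb
  by_contra hne
  have haj : a ≤ j := by
    by_contra hlt
    exact hne (ha j (by omega)).symm
  have e1 := hpr a (by omega)
  rcases lt_trichotomy a b with h | h | h
  · have := hb a h
    omega
  · subst h
    omega
  · have := ha b h
    have := hpr b (by omega)
    omega

lemma up_chain {V : Type} {G : SimpleGraph V} (f : V → V) (x : V) (H : ℕ)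
    (h : ∀ a < H, G.Adj (f^[a] x) (f^[a + 1] x)) :
    ((List.range (H + 1)).map (fun a => f^[a] x)).IsChain G.Adj := by
  rw [List.isChain_map, List.isChain_iff_getElem]
  intro i hi
  simp at hi ⊢
  have := h i hi
  simpa using this

lemma layer_indep {V : Type} [Fintype V] [DecidableEq V] {G : SimpleGraph V} (L : ℕ → Finset V)
    (i ℓ : ℕ) (hdisj : ∀ a b, a ≠ b → ∀ x ∈ L a, x ∉ L b) (v : V) (h0 : L 0 = {v})
    (f : V → V) (hf : ∀ j, ∀ w ∈ L (j + 1), f w ∈ L j ∧ G.Adj w (f w))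
    (h3 : 3 ≤ ℓ) (hi : 2 * i + 1 ≤ ℓ) (hno : ¬ ∃ l, IsCL G l ∧ l.length = ℓ) :
    ∃ I ⊆ L i, (∀ u ∈ I, ∀ v ∈ I, u ≠ v → ¬ G.Adj u v) ∧ (L i).card ≤ (ℓ - 2) * I.card := by
  classical
  let e : V → ℕ := fun w => (Fintype.equivFin V w).1
  have he : ∀ x y, e x = e y → x = y := by
    intro x y h
    exact (Fintype.equivFin V).injective (Fin.ext h)
  let kf : V → ℕ → ℕ := fun w j => e (f^[i - j] w)
  let key : V → Lex (ℕ → ℕ) := fun w => toLex (kf w)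
  have hmem : ∀ w ∈ L i, ∀ h ≤ i, f^[h] w ∈ L (i - h) := by
    intro w hw h
    induction h with
    | zero => intro _; simpa using hw
    | succ h ih =>
      intro hh
      rw [Function.iterate_succ_apply']
      have h1 := ih (by omega)
      have : i - h = (i - (h + 1)) + 1 := by omega
      rw [this] at h1
      exact (hf _ _ h1).1
  have hadj : ∀ w ∈ L i, ∀ h < i, G.Adj (f^[h] w) (f^[h + 1] w) := by
    intro w hw h hh
    rw [Function.iterate_succ_apply']
    have h1 := hmem w hw h (by omega)
    have : i - h = (i - (h + 1)) + 1 := by omega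
    rw [this] at h1
    exact (hf _ _ h1).2
  have hup : ∀ x y : V, ∀ a b : ℕ, a ≤ b → f^[a] x = f^[a] y → f^[b] x = f^[b] y := by
    intro x y a b hab h
    obtain ⟨c, rfl⟩ := Nat.exists_eq_add_of_le hab
    rw [add_comm, Function.iterate_add_apply, Function.iterate_add_apply, h]
  have hlev : ∀ x ∈ L i, ∀ y ∈ L i, ∀ a ≤ i, ∀ b ≤ i, a ≠ b → f^[a] x ≠ f^[b] y := by
    intro x hx y hy a ha b hb hab heq
    have h1 := hmem x hx a ha
    have h2 := hmem y hy b hb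
    rw [← heq] at h2
    exact hdisj (i - a) (i - b) (by omega) _ h1 h2
  have hconv : ∀ x y z : V, key x ≤ key y → key y ≤ key z → ∀ h ≤ i, f^[h] x = f^[h] z →
      f^[h] y = f^[h] x := by
    intro x y z h1 h2 h hh hxz
    have := lex_convex (kf x) (kf y) (kf z) h1 h2 (i - h) (by
      intro j hj
      simp only [kf]
      rw [hup x z h (i - j) (by omega) hxz]) (i - h) le_rfl
    have e1 : i - (i - h) = h := by omega
    simp only [kf, e1] at this
    exact he _ _ this
  rcases mono_path (G := G) key (L i) (by
    intro x _ y _ hxy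
    have := congrFun (toLex_inj.mp hxy) i
    simp only [kf, Nat.sub_self] at this
    exact he _ _ this) (ℓ - 2) (L i) subset_rfl with ⟨l, hll, hlL, hlc⟩ | h
  swap
  · exact h
  exfalso
  apply hno
  have hpw : l.Pairwise (fun x y => key x < key y) := by
    have h1 : (l.map key).IsChain (· < ·) := by
      rw [List.isChain_map]
      exact hlc.imp (fun _ _ h => h.2)
    rw [List.isChain_iff_pairwise, List.pairwise_map] at h1
    exact h1
  have hPL : IsPL G l :=
    ⟨hpw.imp (fun {a b} h hab => by rw [hab] at h; exact lt_irrefl _ h),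
      hlc.imp (fun _ _ h => h.1)⟩
  obtain ⟨z1, t, rfl⟩ : ∃ z1 t, l = z1 :: t := by
    cases l with
    | nil => simp at hll
    | cons a t => exact ⟨a, t, rfl⟩
  have hz1 : z1 ∈ L i := hlL z1 (by simp)
  have hexH : ∃ h, ∀ z ∈ z1 :: t, f^[h] z = f^[h] z1 := by
    refine ⟨i, fun z hz => ?_⟩
    have h1 := hmem z (hlL z hz) i le_rfl
    have h2 := hmem z1 hz1 i le_rfl
    simp only [Nat.sub_self, h0, Finset.mem_singleton] at h1 h2
    rw [h1, h2]
  obtain ⟨H, hHeq, hHmin⟩ : ∃ H, (∀ z ∈ z1 :: t, f^[H] z = f^[H] z1) ∧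
      ∀ h < H, ¬ ∀ z ∈ z1 :: t, f^[h] z = f^[h] z1 :=
    ⟨Nat.find hexH, Nat.find_spec hexH, fun h hh => Nat.find_min hexH hh⟩
  have hHi : H ≤ i := by
    by_contra hlt
    refine hHmin i (by omega) (fun z hz => ?_)
    have h1 := hmem z (hlL z hz) i le_rfl
    have h2 := hmem z1 hz1 i le_rfl
    simp only [Nat.sub_self, h0, Finset.mem_singleton] at h1 h2
    rw [h1, h2]
  have hH0 : H ≠ 0 := by
    rintro rfl
    cases t with
    | nil => simp at hll; omega
    | cons z2 t =>
      have := hHeq z2 (by simp)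
      simp only [Function.iterate_zero, id] at this
      have hnd := hPL.1
      rw [this] at hnd
      simp at hnd
  obtain ⟨H', rfl⟩ := Nat.exists_eq_succ_of_ne_zero hH0
  let P : V → Bool := fun z => decide (f^[H'] z = f^[H'] z1)
  obtain ⟨l1, l2, hl12, hl1P, hl2P, hl1ne, hl2ne⟩ : ∃ l1 l2, z1 :: t = l1 ++ l2 ∧
      (∀ z ∈ l1, f^[H'] z = f^[H'] z1) ∧ (∀ z ∈ l2, f^[H'] z ≠ f^[H'] z1) ∧
      l1 ≠ [] ∧ l2 ≠ [] := by
    have hsplit : z1 :: t = (z1 :: t).takeWhile P ++ (z1 :: t).dropWhile P :=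
      (List.takeWhile_append_dropWhile).symm
    have hone : ∀ z ∈ (z1 :: t).takeWhile P, f^[H'] z = f^[H'] z1 := by
      intro z hz
      have := List.mem_takeWhile_imp hz
      simpa [P] using this
    refine ⟨_, _, hsplit, hone, ?_, ?_, ?_⟩
    · intro z hz heq
      cases hd : (z1 :: t).dropWhile P with
      | nil => rw [hd] at hz; simp at hz
      | cons y0 t' =>
        have hy0 : f^[H'] y0 ≠ f^[H'] z1 := by
          have := List.head_dropWhile_not P (l := z1 :: t) (by rw [hd]; simp)
          simp only [hd, List.head_cons, P] at this
          simpa using this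
        rw [hd] at hz
        rw [List.mem_cons] at hz
        rcases hz with rfl | hz
        · exact hy0 heq
        · have hpw2 : (y0 :: t').Pairwise (fun x y => key x < key y) := by
            rw [hsplit, hd] at hpw
            exact (List.pairwise_append.mp hpw).2.1
          have hlt := List.rel_of_pairwise_cons hpw2 hz
          have hy0mem : y0 ∈ z1 :: t := by
            rw [hsplit, hd]; simp
          have hle : key z1 ≤ key y0 := by
            rw [List.mem_cons] at hy0mem
            rcases hy0mem with h | h
            · rw [h]
            · exact (List.rel_of_pairwise_cons hpw h).le
          exact hy0 (hconv z1 y0 z hle hlt.le H' (by omega) heq.symm)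
    · simp [P]
    · intro hnil
      rw [hnil, List.append_nil] at hsplit
      rw [← hsplit] at hone
      exact hHmin H' (by omega) hone
  have hlen12 : l1.length + l2.length = ℓ - 1 := by
    have := congrArg List.length hl12
    rw [hll, List.length_append] at this
    omega
  have hl1pos : 0 < l1.length := List.length_pos_iff.mpr hl1ne
  have hl2pos : 0 < l2.length := List.length_pos_iff.mpr hl2ne
  obtain ⟨d, hd⟩ : ∃ d, d + 2 * (H' + 1) = ℓ := ⟨ℓ - 2 * (H' + 1), by omega⟩
  obtain ⟨r, r', hrr, hr1, hr2, hr'1, hr'2⟩ : ∃ r r', r + r' = d + 1 ∧ 1 ≤ r ∧ r ≤ l1.length ∧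
      1 ≤ r' ∧ r' ≤ l2.length := by
    by_cases h : d ≤ l2.length
    · exact ⟨1, d, by omega, by omega, by omega, by omega, by omega⟩
    · exact ⟨d + 1 - l2.length, l2.length, by omega, by omega, by omega, by omega, by omega⟩
  obtain ⟨w1, x, s1, hx1, hs1len⟩ : ∃ w1 x s1, l1 = w1 ++ x :: s1 ∧ s1.length + 1 = r := by
    cases hd1 : l1.drop (l1.length - r) with
    | nil =>
      have := congrArg List.length hd1
      simp at this
      omega
    | cons x s1 =>
      refine ⟨l1.take (l1.length - r), x, s1, ?_, ?_⟩
      · rw [← hd1, List.take_append_drop]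
      · have := congrArg List.length hd1
        simp at this
        omega
  obtain ⟨s2, y, w2, hy2, hs2len⟩ : ∃ s2 y w2, l2 = s2 ++ y :: w2 ∧ s2.length + 1 = r' := by
    refine ⟨l2.take (r' - 1), l2[r' - 1]'(by omega), l2.drop r', ?_, ?_⟩
    · conv_lhs => rw [← List.take_append_drop (r' - 1) l2]
      rw [List.drop_eq_getElem_cons (by omega)]
      have : r' - 1 + 1 = r' := by omega
      rw [this]
    · simp
      omega
  have hxl : x ∈ l1 := by rw [hx1]; simp
  have hyl : y ∈ l2 := by rw [hy2]; simp
  have hxt : x ∈ z1 :: t := by rw [hl12]; simp [hxl]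
  have hyt : y ∈ z1 :: t := by rw [hl12]; simp [hyl]
  have hxL := hlL x hxt
  have hyL := hlL y hyt
  have hqinf : x :: ((s1 ++ s2) ++ [y]) <:+: z1 :: t := by
    refine ⟨w1, w2, ?_⟩
    rw [hl12, hx1, hy2]
    simp
  have hq : IsPL G (x :: ((s1 ++ s2) ++ [y])) :=
    ⟨hPL.1.sublist hqinf.sublist, hPL.2.infix hqinf⟩
  have hqL : ∀ z ∈ x :: ((s1 ++ s2) ++ [y]), z ∈ L i := fun z hz => hlL z (hqinf.subset hz)
  -- the tree path
  have hxyne : ∀ a ≤ H', f^[a] x ≠ f^[a] y := by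
    intro a ha heq
    have h1 := hup x y a H' ha heq
    rw [hl1P x hxl] at h1
    exact hl2P y hyl h1.symm
  have htop : f^[H' + 1] x = f^[H' + 1] y := by
    rw [hHeq x hxt, hHeq y hyt]
  let ux := (List.range H').map (fun h => f^[h + 1] x)
  let uy := (List.range H').map (fun h => f^[h + 1] y)
  have hux : ∀ w, (List.range (H' + 1 + 1)).map (fun a => f^[a] w) =
      w :: ((List.range H').map (fun h => f^[h + 1] w) ++ [f^[H' + 1] w]) := by
    intro w
    rw [List.range_succ, List.range_succ_eq_map]
    simp only [List.map_cons, List.map_append, List.map_map, List.map_nil, List.cons_append,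
      Function.iterate_zero, id]
    rfl
  have hcx := up_chain (G := G) f x (H' + 1) (fun a ha => hadj x hxL a (by omega))
  have hcy := up_chain (G := G) f y (H' + 1) (fun a ha => hadj y hyL a (by omega))
  rw [hux] at hcx hcy
  have hp2 : IsPL G (x :: ((ux ++ f^[H' + 1] x :: uy.reverse) ++ [y])) := by
    refine ⟨?_, ?_⟩
    · have hnu : ∀ w ∈ L i, ((List.range H').map (fun h => f^[h + 1] w)).Nodup := by
        intro w hw
        refine List.Nodup.map_on ?_ List.nodup_range
        intro a ha b hb hab
        rw [List.mem_range] at ha hb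
        by_contra hne
        exact hlev w hw w hw (a + 1) (by omega) (b + 1) (by omega) (by omega) hab
      have nx := hnu x hxL
      have ny := hnu y hyL
      have hx0 : ∀ w ∈ L i, ∀ w' ∈ L i, ∀ a ≤ H', w ≠ f^[a + 1] w' := fun w hw w' hw' a ha =>
        hlev w hw w' hw' 0 (by omega) (a + 1) (by omega) (by omega)
      have hxy0 : x ≠ y := hxyne 0 (by omega)
      have mx : ∀ z, z ∈ ux ↔ ∃ a < H', f^[a + 1] x = z := by intro z; simp only [ux, List.mem_map, List.mem_range]
      have my : ∀ z, z ∈ uy ↔ ∃ a < H', f^[a + 1] y = z := by intro z; simp only [uy, List.mem_map, List.mem_range]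
      have hnodup1 : (f^[H' + 1] x :: uy.reverse).Nodup := by
        rw [List.nodup_cons, List.mem_reverse, my, List.nodup_reverse]
        refine ⟨?_, ny⟩
        rintro ⟨a, ha, h⟩
        exact hlev y hyL x hxL (a + 1) (by omega) (H' + 1) (by omega) (by omega) h
      have hnodup2 : (ux ++ f^[H' + 1] x :: uy.reverse).Nodup := by
        rw [List.nodup_append]
        refine ⟨nx, hnodup1, ?_⟩
        intro z hz z' hz' hzz
        subst hzz
        rw [mx] at hz
        obtain ⟨a, ha, rfl⟩ := hz
        rw [List.mem_cons, List.mem_reverse, my] at hz'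
        rcases hz' with h | ⟨b, hb, h⟩
        · exact hlev x hxL x hxL (a + 1) (by omega) (H' + 1) (by omega) (by omega) h
        · by_cases hab : a = b
          · subst hab
            exact hxyne (a + 1) (by omega) h.symm
          · exact hlev y hyL x hxL (b + 1) (by omega) (a + 1) (by omega) (by omega) h
      have hnotin : ∀ w ∈ L i, w ∉ ux ++ f^[H' + 1] x :: uy.reverse := by
        intro w hw hmem'
        rw [List.mem_append, List.mem_cons, List.mem_reverse, mx, my] at hmem'
        rcases hmem' with ⟨a, ha, h⟩ | h | ⟨a, ha, h⟩
        · exact hx0 w hw x hxL a (by omega) h.symm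
        · exact hx0 w hw x hxL H' le_rfl h
        · exact hx0 w hw y hyL a (by omega) h.symm
      rw [List.nodup_cons, List.mem_append, List.nodup_append]
      refine ⟨?_, hnodup2, by simp, ?_⟩
      · rintro (h | h)
        · exact hnotin x hxL h
        · simp at h
          exact hxy0 h
      · intro a ha b hb hab
        simp at hb
        subst hb
        subst hab
        exact hnotin _ hyL ha
    · have e1 : x :: ((ux ++ f^[H' + 1] x :: uy.reverse) ++ [y]) =
        (x :: ux) ++ f^[H' + 1] x :: (uy.reverse ++ [y]) := by simp
      rw [e1, List.isChain_split]
      refine ⟨by rw [List.cons_append]; exact hcx, ?_⟩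
      have e2 : f^[H' + 1] x :: (uy.reverse ++ [y]) = (y :: (uy ++ [f^[H' + 1] y])).reverse := by
        simp [htop]
      rw [e2, List.isChain_reverse]
      exact hcy.imp (fun _ _ h => h.symm)
  refine ⟨_, join_cycle hq hp2 ?_ (by simp; omega), ?_⟩
  · intro z hz hz'
    have hzL := hqL z (by rw [List.mem_cons, List.mem_append]; exact Or.inr (Or.inl hz))
    rw [List.mem_append, List.mem_cons, List.mem_reverse] at hz'
    have hx0 : ∀ w ∈ L i, ∀ w' ∈ L i, ∀ a ≤ H', w ≠ f^[a + 1] w' := fun w hw w' hw' a ha =>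
      hlev w hw w' hw' 0 (by omega) (a + 1) (by omega) (by omega)
    rcases hz' with h | h | h
    · simp only [ux, List.mem_map, List.mem_range] at h
      obtain ⟨a, ha, h⟩ := h
      exact hx0 z hzL x hxL a (by omega) h.symm
    · exact hx0 z hzL x hxL H' le_rfl h
    · simp only [uy, List.mem_map, List.mem_range] at h
      obtain ⟨a, ha, h⟩ := h
      exact hx0 z hzL y hyL a (by omega) h.symm
  · simp [ux, uy]
    omega

/-- Balls around `v` inside `S` (shifted by one). -/
def ballS {V : Type} [DecidableEq V] (G : SimpleGraph V) [DecidableRel G.Adj] (S : Finset V)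
    (v : V) : ℕ → Finset V
  | 0 => ∅
  | i + 1 => S.filter (fun w => w = v ∨ w ∈ ballS G S v i ∨ ∃ u ∈ ballS G S v i, G.Adj u w)

lemma ballS_mono {V : Type} [DecidableEq V] (G : SimpleGraph V) [DecidableRel G.Adj]
    (S : Finset V) (v : V) : Monotone (ballS G S v) := by
  refine monotone_nat_of_le_succ (fun i => ?_)
  intro w hw
  have hS : w ∈ S := by
    cases i with
    | zero => simp [ballS] at hw
    | succ i => rw [ballS] at hw; exact (Finset.mem_filter.mp hw).1
  rw [ballS, Finset.mem_filter]
  exact ⟨hS, Or.inr (Or.inl hw)⟩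

lemma ballS_sub {V : Type} [DecidableEq V] (G : SimpleGraph V) [DecidableRel G.Adj]
    (S : Finset V) (v : V) (i : ℕ) : ballS G S v i ⊆ S := by
  cases i with
  | zero => simp [ballS]
  | succ i => rw [ballS]; exact Finset.filter_subset _ _

lemma short_aux {V : Type} [Fintype V] [DecidableEq V] {G : SimpleGraph V} (k ℓ x g : ℕ)
    (hα : ∀ s : Finset V, (∀ u ∈ s, ∀ v ∈ s, u ≠ v → ¬ G.Adj u v) → s.card ≤ k)
    (h3 : 3 ≤ ℓ) (hx : 2 * x + 1 ≤ ℓ) (hg : 1 ≤ g) (hgx : (ℓ - 2) * k < g ^ x)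
    (hno : ¬ ∃ l, IsCL G l ∧ l.length = ℓ) :
    ∀ (N : ℕ) (S : Finset V), S.card ≤ N →
      ∃ I ⊆ S, (∀ u ∈ I, ∀ v ∈ I, u ≠ v → ¬ G.Adj u v) ∧
        S.card ≤ (ℓ - 2) * (g + 2) * I.card := by
  classical
  intro N
  induction N with
  | zero =>
    intro S hS
    exact ⟨∅, by simp, by simp, by omega⟩
  | succ N ih =>
    intro S hS
    rcases S.eq_empty_or_nonempty with rfl | ⟨v, hv⟩
    · exact ⟨∅, by simp, by simp, by simp⟩
    let b := ballS G S v
    have hbm : Monotone b := ballS_mono G S v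
    have hbS : ∀ i, b i ⊆ S := ballS_sub G S v
    have hb0 : b 0 = ∅ := rfl
    have hb1 : b 1 = {v} := by
      ext w
      change w ∈ ballS G S v (0 + 1) ↔ _
      rw [ballS, Finset.mem_filter, Finset.mem_singleton]
      constructor
      · rintro ⟨_, h | h | ⟨u, h, _⟩⟩
        · exact h
        · simp [ballS] at h
        · simp [ballS] at h
      · rintro rfl
        exact ⟨hv, Or.inl rfl⟩
    have hbs : ∀ i w, w ∈ b (i + 1) ↔ w ∈ S ∧ (w = v ∨ w ∈ b i ∨ ∃ u ∈ b i, G.Adj u w) := by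
      intro i w
      change w ∈ ballS G S v (i + 1) ↔ _
      rw [ballS, Finset.mem_filter]
    let L : ℕ → Finset V := fun i => b (i + 1) \ b i
    have hL : ∀ i w, w ∈ L i ↔ w ∈ b (i + 1) ∧ w ∉ b i := fun i w => Finset.mem_sdiff
    have hdisj : ∀ a c, a ≠ c → ∀ w ∈ L a, w ∉ L c := by
      intro a c hac w ha hc
      rw [hL] at ha hc
      rcases Nat.lt_or_gt_of_ne hac with h | h
      · exact hc.2 (hbm (by omega : a + 1 ≤ c) ha.1)
      · exact ha.2 (hbm (by omega : c + 1 ≤ a) hc.1)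
    have h0 : L 0 = {v} := by
      simp only [L, hb0, hb1, Nat.zero_add, Finset.sdiff_empty]
    have hpar : ∀ j, ∀ w ∈ L (j + 1), ∃ u, u ∈ L j ∧ G.Adj w u := by
      intro j w hw
      rw [hL] at hw
      obtain ⟨h1, h2⟩ := hw
      rw [hbs] at h1
      obtain ⟨hwS, h1⟩ := h1
      have hvb : v ∈ b (j + 1) := hbm (by omega : 1 ≤ j + 1) (by rw [hb1]; simp)
      rcases h1 with rfl | h | ⟨u, hu, hadj⟩
      · exact absurd hvb h2
      · exact absurd h h2
      · refine ⟨u, ?_, hadj.symm⟩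
        rw [hL]
        refine ⟨hu, fun hu' => h2 ?_⟩
        rw [hbs]
        exact ⟨hwS, Or.inr (Or.inr ⟨u, hu', hadj⟩)⟩
    let f : V → V := fun w => if h : ∃ j, w ∈ L (j + 1) then
      (hpar h.choose w h.choose_spec).choose else w
    have hf : ∀ j, ∀ w ∈ L (j + 1), f w ∈ L j ∧ G.Adj w (f w) := by
      intro j w hw
      have h : ∃ j, w ∈ L (j + 1) := ⟨j, hw⟩
      have hj : h.choose = j := by
        by_contra hne
        exact hdisj _ _ (by omega : h.choose + 1 ≠ j + 1) w h.choose_spec hw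
      have h5 := (hpar h.choose w h.choose_spec).choose_spec
      have hfw : f w = (hpar h.choose w h.choose_spec).choose := by
        simp only [f]
        rw [dif_pos h]
      rw [← hfw] at h5
      rw [hj] at h5
      exact h5
    have hlay : ∀ i ≤ x, ∃ I ⊆ L i, (∀ u ∈ I, ∀ v ∈ I, u ≠ v → ¬ G.Adj u v) ∧
        (L i).card ≤ (ℓ - 2) * I.card := fun i hi =>
      layer_indep L i ℓ hdisj v h0 f hf h3 (by omega) hno
    have hex : ∃ i, (L (i + 1)).card ≤ g * (L i).card ∧ i < x := by
      by_contra hcon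
      push Not at hcon
      have hgrow : ∀ i ≤ x, g ^ i ≤ (L i).card := by
        intro i
        induction i with
        | zero => intro _; rw [h0]; simp
        | succ i ihi =>
          intro hi
          have h1 := ihi (by omega)
          by_contra hlt
          have h2 : (L (i + 1)).card ≤ g * (L i).card := by
            have := Nat.mul_le_mul_left g h1
            rw [pow_succ, mul_comm] at hlt
            omega
          have := hcon i h2
          omega
      obtain ⟨I, hI, hIi, hIc⟩ := hlay x le_rfl
      have h1 := hgrow x le_rfl
      have h2 := Nat.mul_le_mul_left (ℓ - 2) (hα I hIi)
      omega
    obtain ⟨i, ⟨hi1, hix⟩, himin⟩ : ∃ i, ((L (i + 1)).card ≤ g * (L i).card ∧ i < x) ∧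
        ∀ j < i, ¬ ((L (j + 1)).card ≤ g * (L j).card ∧ j < x) :=
      ⟨Nat.find hex, Nat.find_spec hex, fun j hj => Nat.find_min hex hj⟩
    have hup : ∀ j < i, (L j).card ≤ (L (j + 1)).card := by
      intro j hj
      have := himin j hj
      have h1 : g * (L j).card < (L (j + 1)).card := by
        by_contra h
        exact this ⟨by omega, by omega⟩
      have h2 := Nat.mul_le_mul_right (L j).card hg
      omega
    have hpos : ∀ j ≤ i, 1 ≤ (L j).card := by
      intro j
      induction j with
      | zero => intro _; rw [h0]; simp
      | succ j ihj =>
        intro hj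
        exact (ihj (by omega)).trans (hup j (by omega))
    let R := b (i + 2) \ b (i - 1)
    have hRL : R ⊆ L (i + 1) ∪ L i ∪ L (i - 1) := by
      intro w hw
      obtain ⟨h1, h2⟩ := Finset.mem_sdiff.mp hw
      rw [Finset.mem_union, Finset.mem_union, hL, hL, hL]
      by_cases h3 : w ∈ b (i + 1)
      · by_cases h4 : w ∈ b i
        · right
          cases i with
          | zero => rw [hb0] at h4; simp at h4
          | succ i => exact ⟨h4, h2⟩
        · left; right; exact ⟨h3, h4⟩
      · left; left; exact ⟨h1, h3⟩
    have hprev : (L (i - 1)).card ≤ (L i).card := by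
      cases i with
      | zero => simp
      | succ i => exact hup i (by omega)
    have hRc : R.card ≤ (g + 2) * (L i).card := by
      have h1 := Finset.card_le_card hRL
      have h2 := Finset.card_union_le (L (i + 1) ∪ L i) (L (i - 1))
      have h3 := Finset.card_union_le (L (i + 1)) (L i)
      have : (g + 2) * (L i).card = g * (L i).card + 2 * (L i).card := by ring
      omega
    have hLR : L i ⊆ R := by
      intro w hw
      rw [hL] at hw
      exact Finset.mem_sdiff.mpr ⟨hbm (by omega : i + 1 ≤ i + 2) hw.1,
        fun h => hw.2 (hbm (by omega : i - 1 ≤ i) h)⟩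
    have hRS : R ⊆ S := fun w hw => hbS _ (Finset.mem_sdiff.mp hw).1
    have hRpos : 1 ≤ R.card := (hpos i le_rfl).trans (Finset.card_le_card hLR)
    have hSR : (S \ R).card + R.card = S.card := Finset.card_sdiff_add_card_eq_card hRS
    obtain ⟨I', hI', hI'i, hI'c⟩ := ih (S \ R) (by omega)
    obtain ⟨I0, hI0, hI0i, hI0c⟩ := hlay i (by omega)
    have hcross : ∀ u ∈ I0, ∀ w ∈ I', ¬ G.Adj u w := by
      intro u hu w hw hadj
      have huL := hI0 hu
      rw [hL] at huL
      obtain ⟨hwS, hwR⟩ := Finset.mem_sdiff.mp (hI' hw)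
      have h1 : w ∈ b (i + 2) := by
        rw [hbs]
        exact ⟨hwS, Or.inr (Or.inr ⟨u, huL.1, hadj⟩)⟩
      have h2 : w ∈ b (i - 1) := by
        by_contra h
        exact hwR (Finset.mem_sdiff.mpr ⟨h1, h⟩)
      cases i with
      | zero => simp [hb0] at h2
      | succ i =>
        apply huL.2
        rw [hbs]
        exact ⟨hbS _ huL.1, Or.inr (Or.inr ⟨w, h2, hadj.symm⟩)⟩
    have hdj : Disjoint I0 I' := by
      rw [Finset.disjoint_left]
      intro w h1 h2
      exact (Finset.mem_sdiff.mp (hI' h2)).2 (hLR (hI0 h1))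
    refine ⟨I0 ∪ I', ?_, ?_, ?_⟩
    · exact Finset.union_subset (hI0.trans (hLR.trans hRS)) (hI'.trans Finset.sdiff_subset)
    · intro u hu w hw huw
      rw [Finset.mem_union] at hu hw
      rcases hu with hu | hu <;> rcases hw with hw | hw
      · exact hI0i u hu w hw huw
      · exact hcross u hu w hw
      · exact fun h => hcross w hw u hu h.symm
      · exact hI'i u hu w hw huw
    · rw [Finset.card_union_of_disjoint hdj]
      have h1 := Nat.mul_le_mul_left (g + 2) hI0c
      have h2 : (g + 2) * ((ℓ - 2) * I0.card) = (ℓ - 2) * (g + 2) * I0.card := by ring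
      have h3 : (ℓ - 2) * (g + 2) * (I0.card + I'.card) =
        (ℓ - 2) * (g + 2) * I0.card + (ℓ - 2) * (g + 2) * I'.card := by ring
      omega

lemma short {V : Type} [Fintype V] [DecidableEq V] {G : SimpleGraph V} (k ℓ : ℕ) (hk : 1 ≤ k)
    (hα : ∀ s : Finset V, (∀ u ∈ s, ∀ v ∈ s, u ≠ v → ¬ G.Adj u v) → s.card ≤ k)
    (h3 : 3 ≤ ℓ) (hl : ℓ ≤ 6 * k) (hn : 42 * k ^ 2 < Fintype.card V) :
    ∃ l, IsCL G l ∧ l.length = ℓ := by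
  classical
  by_contra hno
  obtain ⟨x, hx⟩ : ∃ x, x = (ℓ - 1) / 2 := ⟨_, rfl⟩
  have hx1 : 1 ≤ x := by omega
  have hx2 : ℓ - 2 ≤ 2 * x := by omega
  have hx3 : x ≤ 3 * k := by omega
  obtain ⟨t, ht⟩ : ∃ t, t = 9 * k / x + 1 := ⟨_, rfl⟩
  have hdm := Nat.div_add_mod (9 * k) x
  have hmod := Nat.mod_lt (9 * k) hx1
  have hxt : 9 * k ≤ x * t := by
    rw [ht, mul_add]; omega
  have hxt2 : x * t ≤ 9 * k + x := by
    rw [ht, mul_add]; omega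
  have hbern : ∀ m : ℕ, 1 + m * t ≤ (1 + t) ^ m := by
    intro m
    induction m with
    | zero => simp
    | succ m ih =>
      rw [pow_succ]
      nlinarith [Nat.zero_le (m * t * t)]
  have hgx : (ℓ - 2) * k < (1 + t) ^ x := by
    have h1 : (ℓ - 2) * k ≤ 2 * x * k := Nat.mul_le_mul_right k hx2
    rcases Nat.lt_or_ge x 2 with h | h
    · have : x = 1 := by omega
      subst this
      simp only [pow_one]
      omega
    · have h2 := hbern (x / 2)
      have h4 : 3 * (x / 2) ≥ x := by omega
      have h5 : 3 * k ≤ (x / 2) * t := by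
        have := Nat.mul_le_mul_right t h4
        have e : 3 * (x / 2) * t = 3 * (x / 2 * t) := by ring
        omega
      have h6 : (1 + 3 * k) * (1 + 3 * k) ≤ (1 + t) ^ (x / 2) * (1 + t) ^ (x / 2) :=
        Nat.mul_le_mul (by omega) (by omega)
      have h7 : (1 + t) ^ (x / 2) * (1 + t) ^ (x / 2) ≤ (1 + t) ^ x := by
        rw [← pow_add]
        exact Nat.pow_le_pow_right (by omega) (by omega)
      have h8 : 2 * x * k ≤ 6 * k * k := Nat.mul_le_mul_right k (by omega)
      nlinarith
  obtain ⟨I, -, hIi, hIc⟩ := short_aux (G := G) k ℓ x (1 + t) hα h3 (by omega) (by omega) hgx hno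
    _ Finset.univ le_rfl
  rw [Finset.card_univ] at hIc
  have h1 := hα I hIi
  have h2 : (ℓ - 2) * (1 + t + 2) ≤ 42 * k := by
    have h4 : (ℓ - 2) * (1 + t + 2) ≤ 2 * x * (1 + t + 2) := Nat.mul_le_mul_right _ hx2
    have h5 : 2 * x * (1 + t + 2) = 2 * (x * t) + 6 * x := by ring
    omega
  have h4 := Nat.mul_le_mul h2 h1
  have h5 : 42 * k * k = 42 * k ^ 2 := by ring
  omega

lemma isCL_map {V V' : Type} {G : SimpleGraph V} (f : V' → V) (hf : Function.Injective f)
    (l : List V') : IsCL (G.comap f) l ↔ IsCL G (l.map f) := by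
  unfold IsCL
  rw [List.nodup_map_iff hf, List.length_map, ← Cycle.map_coe, Cycle.chain_map]
  rfl

/-- The hypothesis for a fixed `k`, with the bound `T` on the number of vertices. -/
def StepHyp (T : ℝ) (k : ℕ) : Prop :=
  ∀ (V : Type) [Fintype V] [DecidableEq V] (G : SimpleGraph V),
    G.IsHamiltonian →
    (∀ s : Finset V, (∀ u ∈ s, ∀ v ∈ s, u ≠ v → ¬ G.Adj u v) → s.card ≤ k) →
    T ≤ (Fintype.card V : ℝ) →
    ∃ (u : V) (w : G.Walk u u), w.IsCycle ∧ w.length = Fintype.card V - 1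

lemma iter_step {V : Type} [Fintype V] [DecidableEq V] {G : SimpleGraph V} {T : ℝ} {k : ℕ}
    (hS : StepHyp T k)
    (hα : ∀ s : Finset V, (∀ u ∈ s, ∀ v ∈ s, u ≠ v → ¬ G.Adj u v) → s.card ≤ k)
    (l : List V) (hl : IsCL G l) (hT : T ≤ (l.length : ℝ)) :
    ∃ l', IsCL G l' ∧ l'.length = l.length - 1 := by
  let f : Fin l.length → V := l.get
  have hf : Function.Injective f := List.nodup_iff_injective_get.mp hl.1
  have hml : (List.finRange l.length).map f = l := List.map_get_finRange l
  have hC : IsCL (G.comap f) (List.finRange l.length) := by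
    rw [isCL_map f hf, hml]
    exact hl
  obtain ⟨u, w, hw, hwl, -⟩ := hC.to_walk
  rw [List.length_finRange] at hwl
  have hH : (G.comap f).IsHamiltonian := by
    intro _
    refine ⟨u, w, ?_⟩
    rw [SimpleGraph.Walk.isHamiltonianCycle_iff_isCycle_and_length_eq]
    exact ⟨hw, by rw [hwl, Fintype.card_fin]⟩
  obtain ⟨u', w', hw', hwl'⟩ := hS (Fin l.length) (G.comap f) hH (by
    intro s hs
    rw [← Finset.card_image_of_injective s hf]
    apply hα
    intro a ha b hb hab
    obtain ⟨a', ha', rfl⟩ := Finset.mem_image.mp ha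
    obtain ⟨b', hb', rfl⟩ := Finset.mem_image.mp hb
    exact hs a' ha' b' hb' (fun h => hab (by rw [h]))) (by rw [Fintype.card_fin]; exact hT)
  obtain ⟨l', hl', hll', -⟩ := walk_to_list w' hw'
  refine ⟨l'.map f, (isCL_map f hf l').mp hl', ?_⟩
  rw [List.length_map, hll', hwl', Fintype.card_fin]

lemma iter {V : Type} [Fintype V] [DecidableEq V] {G : SimpleGraph V} {T : ℝ} {k : ℕ}
    (hS : StepHyp T k)
    (hα : ∀ s : Finset V, (∀ u ∈ s, ∀ v ∈ s, u ≠ v → ¬ G.Adj u v) → s.card ≤ k)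
    (l : List V) (hl : IsCL G l) (m : ℕ) (hT : T ≤ (m : ℝ)) :
    ∀ d, d + m ≤ l.length → ∃ l', IsCL G l' ∧ l'.length + d = l.length := by
  intro d
  induction d with
  | zero => intro _; exact ⟨l, hl, rfl⟩
  | succ d ih =>
    intro hd
    obtain ⟨l1, hl1, hlen⟩ := ih (by omega)
    have hm : (m : ℝ) ≤ (l1.length : ℝ) := by exact_mod_cast (by omega : m ≤ l1.length)
    obtain ⟨l2, hl2, hlen2⟩ := iter_step hS hα l1 hl1 (hT.trans hm)
    have := hl1.2.1
    exact ⟨l2, hl2, by omega⟩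

lemma main_fixed {V : Type} [Fintype V] [DecidableEq V] {G : SimpleGraph V} {T : ℝ} {k : ℕ}
    (hk : 1 ≤ k) (hS : StepHyp T k) (hG : G.IsHamiltonian)
    (hα : ∀ s : Finset V, (∀ u ∈ s, ∀ v ∈ s, u ≠ v → ¬ G.Adj u v) → s.card ≤ k)
    (M : ℕ) (hM : T ≤ (M : ℝ)) (hn : 2 * M + 42 * k ^ 2 < Fintype.card V)
    (ℓ : ℕ) (h3 : 3 ≤ ℓ) (hl : ℓ ≤ Fintype.card V) :
    ∃ l, IsCL G l ∧ l.length = ℓ := by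
  obtain ⟨a, p, hp⟩ := hG (by omega)
  obtain ⟨lV, hlV, hlen, hmem⟩ := walk_to_list p hp.isCycle
  have hall : ∀ x, x ∈ lV := fun x => (hmem x).mpr (hp.mem_support x)
  rw [hp.length_eq] at hlen
  rcases Nat.lt_or_ge ℓ M with h | h
  · rcases Nat.lt_or_ge ℓ (6 * k) with h' | h'
    · exact short k ℓ hk hα h3 h'.le (by omega)
    · obtain ⟨lA, hlA, hlenA⟩ := iter hS hα lV hlV M hM (Fintype.card V - 2 * M) (by omega)
      have hc : lA.toFinset.card = lA.length := List.toFinset_card_of_nodup hlA.1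
      have hBc := Finset.card_compl lA.toFinset
      refine medium hk Finset.univ (fun x => Finset.mem_univ x) (fun s _ hs => hα s hs) lV lA hlV
        hall hlA (lA.toFinset)ᶜ ?_ ?_ ℓ h' (by omega)
      · intro x hx
        simpa using hx
      · omega
  · obtain ⟨l', h1, h2⟩ := iter hS hα lV hlV M hM (Fintype.card V - ℓ) (by omega)
    exact ⟨l', h1, by omega⟩

/-- If there is a constant `c > 0` such that every Hamiltonian graph `G` on
`n ≥ c·k^(11/5)` vertices with independence number at most `k` contains, for every vertex set
`W` with `|W| ≤ 20·k²`, a cycle of length `n − 1` through all of `W`, then there is a constant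
`c' > 0` such that every Hamiltonian graph on `n ≥ c'·k^(11/5)` vertices with independence
number at most `k` is pancyclic. -/
theorem statement2
    (h : ∃ c : ℝ, 0 < c ∧
      ∀ (k : ℕ), 0 < k →
        ∀ (V : Type) [Fintype V] [DecidableEq V] (G : SimpleGraph V) (W : Finset V),
          G.IsHamiltonian →
          (∀ s : Finset V, (∀ u ∈ s, ∀ v ∈ s, u ≠ v → ¬ G.Adj u v) → s.card ≤ k) →
          c * (k : ℝ) ^ ((11 : ℝ) / 5) ≤ (Fintype.card V : ℝ) →
          W.card ≤ 20 * k ^ 2 →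
          ∃ (u : V) (w : G.Walk u u), w.IsCycle ∧ w.length = Fintype.card V - 1 ∧
            ∀ x ∈ W, x ∈ w.support) :
    ∃ c' : ℝ, 0 < c' ∧
      ∀ (k : ℕ), 0 < k →
        ∀ (V : Type) [Fintype V] [DecidableEq V] (G : SimpleGraph V),
          G.IsHamiltonian →
          (∀ s : Finset V, (∀ u ∈ s, ∀ v ∈ s, u ≠ v → ¬ G.Adj u v) → s.card ≤ k) →
          c' * (k : ℝ) ^ ((11 : ℝ) / 5) ≤ (Fintype.card V : ℝ) →
          ∀ ℓ : ℕ, 3 ≤ ℓ → ℓ ≤ Fintype.card V →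
            ∃ (u : V) (w : G.Walk u u), w.IsCycle ∧ w.length = ℓ := by
  obtain ⟨c, hc, h⟩ := h
  refine ⟨2 * c + 60, by linarith, ?_⟩
  intro k hk V _ _ G hG hα hn ℓ h3 hl
  have hk1 : (1 : ℝ) ≤ (k : ℝ) := by exact_mod_cast hk
  obtain ⟨q, hq⟩ : ∃ q : ℝ, q = (k : ℝ) ^ ((11 : ℝ) / 5) := ⟨_, rfl⟩
  have hqk : (k : ℝ) ^ 2 ≤ q := by
    rw [hq, ← Real.rpow_natCast (k : ℝ) 2]
    exact Real.rpow_le_rpow_of_exponent_le hk1 (by norm_num)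
  have hq1 : 1 ≤ q := by nlinarith
  have hS : StepHyp (c * (k : ℝ) ^ ((11 : ℝ) / 5)) k := by
    intro V' _ _ G' hG' hα' hn'
    obtain ⟨u, w, hw, hwl, -⟩ := h k hk V' G' ∅ hG' hα' hn' (by simp)
    exact ⟨u, w, hw, hwl⟩
  rw [← hq] at hS hn
  have hcq : 0 ≤ c * q := by positivity
  have hceil : (⌈c * q⌉₊ : ℝ) < c * q + 1 := Nat.ceil_lt_add_one hcq
  obtain ⟨l, hl, hlen⟩ := main_fixed hk hS hG hα ⌈c * q⌉₊ (Nat.le_ceil _) (by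
    have : ((2 * ⌈c * q⌉₊ + 42 * k ^ 2 : ℕ) : ℝ) < (Fintype.card V : ℝ) := by
      push_cast
      nlinarith
    exact_mod_cast this) ℓ h3 hl
  obtain ⟨u, w, hw, hwl, -⟩ := hl.to_walk
  exact ⟨u, w, hw, by rw [hwl, hlen]⟩
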